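/- Let κ : ℝ → ℝ be smooth with κ(s) > 0 for all s, let α ∈ (0, π), set θ(s) = ∫₀ˢ κ(t) dt, and define ψ(s) = sin α · ∫₀ˢ ( cos(θ(t)/ sin α), sin(θ(t)/ sin α), cot α ) dt. Then ψ is a unit speed curve (‖ψ'(s)‖ = 1 for all s), its curvature satisfies ‖ψ''(s)‖ = κ(s) for all s, its torsion satisfies ⟨ψ'(s) × ψ''(s), ψ'''(s)⟩ / ‖ψ''(s)‖² = cot(α)·κ(s) for all s (so ψ is a general helix with τ/κ = cot α), and its tangent makes the constant angle α with e₃, i.e. ⟨ψ'(s), e₃⟩ = cos α for all s. -/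

import Mathlib

/-!
The circular helix with tangent `T φ = (sin α cos φ, sin α sin φ, cos α)` and principal normal
`N φ = (-sin φ, cos φ, 0)` satisfies `T' = sin α • N` and `N' = cos α • (T × N) - sin α • T`: its
curvature is `sin α` and its torsion `cos α`. The tangent of `ψ` is `T (θ / sin α)`, so by the chain
rule both coefficients are multiplied by `κ / sin α`, which turns them into `κ` and `cot α * κ`.
-/

noncomputable section
open Real
open scoped RealInnerProductSpace

/-- Euclidean 3-space with the standard inner product. -/
abbrev E3 := EuclideanSpace ℝ (Fin 3)

/-- The point of `E3` with coordinates `(x, y, z)`. -/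
def vec3 (x y z : ℝ) : E3 := !₂[x, y, z]

/-- The standard cross product on `E3`. -/
def cross3 (u v : E3) : E3 :=
  vec3 (u 1 * v 2 - u 2 * v 1) (u 2 * v 0 - u 0 * v 2) (u 0 * v 1 - u 1 * v 0)

/-- The third standard basis vector `e₃` of `E3`. -/
def e₃ : E3 := EuclideanSpace.single (2 : Fin 3) (1 : ℝ)

section CrossProduct

open scoped Matrix

lemma cross3_eq_toLp_crossProduct (u v : E3) : cross3 u v = WithLp.toLp 2 (u.ofLp ⨯₃ v.ofLp) := by
  simp [cross3, vec3, cross_apply]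

lemma cross3_smul_right (c : ℝ) (u v : E3) : cross3 u (c • v) = c • cross3 u v := by
  simp [cross3_eq_toLp_crossProduct]

lemma inner_cross3_left_self (u v : E3) : ⟪cross3 u v, u⟫ = 0 := by
  simp [cross3_eq_toLp_crossProduct, EuclideanSpace.inner_eq_star_dotProduct]

lemma inner_cross3_right_self (u v : E3) : ⟪cross3 u v, v⟫ = 0 := by
  simp [cross3_eq_toLp_crossProduct, EuclideanSpace.inner_eq_star_dotProduct]

lemma norm_cross3_sq (u v : E3) : ‖cross3 u v‖ ^ 2 = ‖u‖ ^ 2 * ‖v‖ ^ 2 - ⟪u, v⟫ ^ 2 := by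
  simp only [← real_inner_self_eq_norm_sq, cross3_eq_toLp_crossProduct,
    EuclideanSpace.inner_eq_star_dotProduct, star_trivial, cross_dot_cross]
  rw [dotProduct_comm v.ofLp u.ofLp, sq]

end CrossProduct

section Coordinates

lemma norm_vec3 (x y z : ℝ) : ‖vec3 x y z‖ = √(x ^ 2 + y ^ 2 + z ^ 2) := by
  simp [vec3, EuclideanSpace.norm_eq, Fin.sum_univ_three]

lemma inner_vec3 (x y z x' y' z' : ℝ) :
    ⟪vec3 x y z, vec3 x' y' z'⟫ = x * x' + y * y' + z * z' := by
  simp [vec3, PiLp.inner_apply, Fin.sum_univ_three, mul_comm]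

lemma hasDerivAt_vec3 {x y z : ℝ → ℝ} {x' y' z' s : ℝ} (hx : HasDerivAt x x' s)
    (hy : HasDerivAt y y' s) (hz : HasDerivAt z z' s) :
    HasDerivAt (fun t => vec3 (x t) (y t) (z t)) (vec3 x' y' z') s := by
  have hcoord : HasDerivAt (fun t => ![x t, y t, z t]) ![x', y', z'] s := by
    rw [hasDerivAt_pi]
    intro i
    fin_cases i <;> assumption
  exact (PiLp.hasFDerivAt_toLp (𝕜 := ℝ) 2 _).comp_hasDerivAt s hcoord

end Coordinates

section Frenet

/-- The torsion of a unit speed curve, written without reference to a Frenet frame. It takes the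
junk value `0` where the curvature `‖γ''‖` vanishes. -/
def torsion (γ : ℝ → E3) (s : ℝ) : ℝ :=
  ⟪cross3 (deriv γ s) (deriv (deriv γ) s), deriv (deriv (deriv γ)) s⟫ / ‖deriv (deriv γ) s‖ ^ 2

lemma torsion_eq_of_frenet {γ T N : ℝ → E3} {κ : ℝ → ℝ} {τ s : ℝ}
    (hγ : ∀ t, HasDerivAt γ (T t) t) (hT : ∀ t, HasDerivAt T (κ t • N t) t)
    (hN : HasDerivAt N (τ • cross3 (T s) (N s) - κ s • T s) s)
    (hT_unit : ‖T s‖ = 1) (hN_unit : ‖N s‖ = 1) (hTN : ⟪T s, N s⟫ = 0)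
    (hκ : DifferentiableAt ℝ κ s) (hκ_ne : κ s ≠ 0) :
    torsion γ s = τ := by
  have hγ₁ : deriv γ = T := funext fun t => (hγ t).deriv
  have hγ₂ : deriv T = fun t => κ t • N t := funext fun t => (hT t).deriv
  have hγ₃ : deriv (fun t => κ t • N t) s =
      κ s • (τ • cross3 (T s) (N s) - κ s • T s) + deriv κ s • N s :=
    (hκ.hasDerivAt.smul hN).deriv
  have hB_unit : ‖cross3 (T s) (N s)‖ ^ 2 = 1 := by
    simp [norm_cross3_sq, hT_unit, hN_unit, hTN]
  have htriple : ⟪cross3 (T s) (κ s • N s),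
      κ s • (τ • cross3 (T s) (N s) - κ s • T s) + deriv κ s • N s⟫ = τ * κ s ^ 2 := by
    simp only [cross3_smul_right, inner_add_right, inner_sub_right, real_inner_smul_left,
      real_inner_smul_right, inner_cross3_left_self, inner_cross3_right_self,
      real_inner_self_eq_norm_sq, hB_unit]
    ring
  have hcurvature : ‖κ s • N s‖ ^ 2 = κ s ^ 2 := by
    rw [norm_smul, hN_unit, mul_one, norm_eq_abs, sq_abs]
  simp only [torsion, hγ₁, hγ₂, hγ₃]
  rw [htriple, hcurvature, mul_div_cancel_right₀ τ (pow_ne_zero 2 hκ_ne)]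

end Frenet

section HelixFrame

/-- For `0 < α < π`, the unit vector at angle `α` to `e₃` whose horizontal part points in the
direction `φ`. These are the tangents of the helices with axis `e₃` and angle `α`. -/
def helixTangent (α φ : ℝ) : E3 := vec3 (sin α * cos φ) (sin α * sin φ) (cos α)

/-- The principal normal of a helix with axis `e₃` where its tangent is `helixTangent α φ`; it is
horizontal and does not depend on `α`. -/
def helixNormal (φ : ℝ) : E3 := vec3 (-sin φ) (cos φ) 0

lemma norm_helixTangent (α φ : ℝ) : ‖helixTangent α φ‖ = 1 := by
  rw [helixTangent, norm_vec3, sqrt_eq_one]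
  linear_combination sin α ^ 2 * sin_sq_add_cos_sq φ + sin_sq_add_cos_sq α

lemma norm_helixNormal (φ : ℝ) : ‖helixNormal φ‖ = 1 := by
  simp [helixNormal, norm_vec3]

lemma inner_helixTangent_helixNormal (α φ : ℝ) : ⟪helixTangent α φ, helixNormal φ⟫ = 0 := by
  rw [helixTangent, helixNormal, inner_vec3]
  ring

lemma inner_helixTangent_e₃ (α φ : ℝ) : ⟪helixTangent α φ, e₃⟫ = cos α := by
  simp [helixTangent, vec3, e₃, EuclideanSpace.inner_single_right]

lemma cross3_helixTangent_helixNormal (α φ : ℝ) :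
    cross3 (helixTangent α φ) (helixNormal φ) =
      vec3 (-(cos α * cos φ)) (-(cos α * sin φ)) (sin α) := by
  have hz : sin α * cos φ * cos φ + sin α * sin φ * sin φ = sin α := by
    linear_combination sin α * sin_sq_add_cos_sq φ
  simp [cross3, helixTangent, helixNormal, vec3, hz]

lemma hasDerivAt_helixTangent (α φ : ℝ) :
    HasDerivAt (helixTangent α) (sin α • helixNormal φ) φ := by
  refine (hasDerivAt_vec3 ((hasDerivAt_cos φ).const_mul (sin α))
    ((hasDerivAt_sin φ).const_mul (sin α)) (hasDerivAt_const φ (cos α))).congr_deriv ?_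
  ext i
  fin_cases i <;> simp [helixNormal, vec3]

lemma hasDerivAt_helixNormal (α φ : ℝ) :
    HasDerivAt helixNormal
      (cos α • cross3 (helixTangent α φ) (helixNormal φ) - sin α • helixTangent α φ) φ := by
  refine (hasDerivAt_vec3 (hasDerivAt_sin φ).neg (hasDerivAt_cos φ)
    (hasDerivAt_const φ (0 : ℝ))).congr_deriv ?_
  rw [cross3_helixTangent_helixNormal]
  have hx : -cos φ = cos α * -(cos α * cos φ) - sin α * (sin α * cos φ) := by
    linear_combination cos φ * sin_sq_add_cos_sq α
  have hy : -sin φ = cos α * -(cos α * sin φ) - sin α * (sin α * sin φ) := by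
    linear_combination sin φ * sin_sq_add_cos_sq α
  have hz : 0 = cos α * sin α - sin α * cos α := by ring
  ext i
  fin_cases i
  exacts [hx, hy, hz]

lemma sin_smul_vec3_cot {α : ℝ} (hα : sin α ≠ 0) (φ : ℝ) :
    sin α • vec3 (cos φ) (sin φ) (cot α) = helixTangent α φ := by
  have hz : sin α * cot α = cos α := by rw [cot_eq_cos_div_sin, mul_div_cancel₀ _ hα]
  ext i
  fin_cases i <;> simp [helixTangent, vec3, hz]

variable {α κ s : ℝ} {θ : ℝ → ℝ}

lemma hasDerivAt_helixTangent_comp (hα : sin α ≠ 0) (hθ : HasDerivAt θ κ s) :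
    HasDerivAt (fun t => helixTangent α (θ t / sin α)) (κ • helixNormal (θ s / sin α)) s := by
  refine ((hasDerivAt_helixTangent α _).scomp s (hθ.div_const (sin α))).congr_deriv ?_
  rw [smul_smul, div_mul_cancel₀ κ hα]

lemma hasDerivAt_helixNormal_comp (hα : sin α ≠ 0) (hθ : HasDerivAt θ κ s) :
    HasDerivAt (fun t => helixNormal (θ t / sin α))
      ((cot α * κ) • cross3 (helixTangent α (θ s / sin α)) (helixNormal (θ s / sin α)) -
        κ • helixTangent α (θ s / sin α)) s := by
  refine ((hasDerivAt_helixNormal α _).scomp s (hθ.div_const (sin α))).congr_deriv ?_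
  rw [smul_sub, smul_smul, smul_smul, div_mul_cancel₀ κ hα, div_mul_eq_mul_div, cot_eq_cos_div_sin,
    div_mul_eq_mul_div, mul_comm κ]

lemma hasDerivAt_sin_smul_integral (hα : sin α ≠ 0) (hθ : Continuous θ) (s : ℝ) :
    HasDerivAt
      (fun s => sin α • ∫ t in (0 : ℝ)..s, vec3 (cos (θ t / sin α)) (sin (θ t / sin α)) (cot α))
      (helixTangent α (θ s / sin α)) s := by
  have hT : Continuous (helixTangent α) :=
    continuous_iff_continuousAt.2 fun φ => (hasDerivAt_helixTangent α φ).continuousAt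
  simp only [← intervalIntegral.integral_smul, sin_smul_vec3_cot hα]
  exact ((hT.comp (hθ.div_const _)).integral_hasStrictDerivAt 0 s).hasDerivAt

end HelixFrame

theorem helix_construction_general
    {κ : ℝ → ℝ} (hκ : Continuous κ) {α : ℝ} (hα : sin α ≠ 0)
    {θ : ℝ → ℝ} (hθ : ∀ s, θ s = ∫ t in (0 : ℝ)..s, κ t) {ψ : ℝ → E3}
    (hψ : ∀ s, ψ s = sin α •
      ∫ t in (0 : ℝ)..s, vec3 (cos (θ t / sin α)) (sin (θ t / sin α)) (cot α))
    (s : ℝ) :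
    ‖deriv ψ s‖ = 1 ∧
      ‖deriv (deriv ψ) s‖ = |κ s| ∧
      (DifferentiableAt ℝ κ s → κ s ≠ 0 → torsion ψ s = cot α * κ s) ∧
      ⟪deriv ψ s, e₃⟫ = cos α := by
  have hθ' (t : ℝ) : HasDerivAt θ (κ t) t :=
    funext hθ ▸ (hκ.integral_hasStrictDerivAt 0 t).hasDerivAt
  have hθc : Continuous θ := continuous_iff_continuousAt.2 fun t => (hθ' t).continuousAt
  have hψ' (t : ℝ) : HasDerivAt ψ (helixTangent α (θ t / sin α)) t :=
    funext hψ ▸ hasDerivAt_sin_smul_integral hα hθc t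
  have hT (t : ℝ) := hasDerivAt_helixTangent_comp hα (hθ' t)
  have hψ₁ : deriv ψ = fun t => helixTangent α (θ t / sin α) := funext fun t => (hψ' t).deriv
  refine ⟨?unit_speed, ?curvature, fun hκs hκ_ne => ?torsion, ?angle⟩
  case unit_speed => rw [hψ₁, norm_helixTangent]
  case curvature => rw [hψ₁, (hT s).deriv, norm_smul, norm_helixNormal, mul_one, norm_eq_abs]
  case torsion =>
    exact torsion_eq_of_frenet hψ' hT (hasDerivAt_helixNormal_comp hα (hθ' s))
      (norm_helixTangent _ _) (norm_helixNormal _) (inner_helixTangent_helixNormal _ _) hκs hκ_ne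
  case angle => rw [hψ₁, inner_helixTangent_e₃]

/-- The curve constructed from an arbitrary positive curvature κ and angle α by
the integral formula is a unit speed general helix with curvature κ, torsion
cot α · κ, and axis e₃. -/
theorem helix_construction
    (κ : ℝ → ℝ) (hκsm : ContDiff ℝ (⊤ : ℕ∞) κ) (hκpos : ∀ s, 0 < κ s)
    (α : ℝ) (hα : α ∈ Set.Ioo (0 : ℝ) π)
    (θ : ℝ → ℝ) (hθ : ∀ s, θ s = ∫ t in (0:ℝ)..s, κ t)
    (ψ : ℝ → E3)
    (hψdef : ∀ s, ψ s = Real.sin α •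
      ∫ t in (0:ℝ)..s,
        vec3 (Real.cos (θ t / Real.sin α)) (Real.sin (θ t / Real.sin α)) (Real.cot α)) :
    ∀ s : ℝ,
      ‖deriv ψ s‖ = 1 ∧
      ‖deriv (deriv ψ) s‖ = κ s ∧
      ⟪cross3 (deriv ψ s) (deriv (deriv ψ) s), deriv (deriv (deriv ψ)) s⟫
          / ‖deriv (deriv ψ) s‖ ^ 2 = Real.cot α * κ s ∧
      ⟪deriv ψ s, e₃⟫ = Real.cos α := by
  intro s
  obtain ⟨unit_speed, curvature, torsion_eq, angle⟩ :=
    helix_construction_general hκsm.continuous (sin_pos_of_mem_Ioo hα).ne' hθ hψdef s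
  exact ⟨unit_speed, curvature.trans (abs_of_pos (hκpos s)),
    torsion_eq (hκsm.differentiable (by simp) s) (hκpos s).ne', angle⟩
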